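/- Let f : X → Y and g : Z → Y be continuous maps of topological spaces, let T = Z ×_Y X = {(z, x) ∈ Z × X : g(z) = f(x)} with the subspace topology of the product, and let f′ : T → Z be the first projection (the base change of f along g). If g is a surjective local homeomorphism and f′ is a local homeomorphism, then f is a local homeomorphism. -/

import Mathlib

/-!
Near `z`, where `(z, x)` is a point of the fiber product, `g` restricts to a homeomorphism `e`
between open sets, and `x ↦ (e.symm (f x), x)` is a section of the second projection over the open
set `f ⁻¹' e.target`. This section is an open embedding, and composing it with `g ∘ f'` gives back
`f` on that open set. So `f` is locally a composition of local homeomorphisms.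
-/

open Function Set Topology

section

variable {X Y Z : Type*} [TopologicalSpace Y] [TopologicalSpace Z]

/-- The local section of the second projection `Z ×_Y X → X` determined by a local inverse of
`e : Z → Y`. Its domain is the subtype `f ⁻¹' e.target`, as the fiber product may have no point
to serve as a value elsewhere. -/
def pullbackSection (e : OpenPartialHomeomorph Z Y) (f : X → Y) (x : f ⁻¹' e.target) :
    Pullback e f :=
  ⟨(e.symm (f x), x), e.right_inv x.2⟩

theorem range_pullbackSection (e : OpenPartialHomeomorph Z Y) (f : X → Y) :
    range (pullbackSection e f) = Pullback.fst ⁻¹' e.source := by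
  ext p
  constructor
  · rintro ⟨x, rfl⟩
    exact e.map_target x.2
  · intro hp
    have hx : f p.snd ∈ e.target := p.2 ▸ e.map_source hp
    have hz : e.symm (f p.snd) = p.fst := (congrArg e.symm p.2.symm).trans (e.left_inv hp)
    exact ⟨⟨p.snd, hx⟩, Subtype.ext (Prod.ext hz rfl)⟩

theorem comp_fst_comp_pullbackSection (e : OpenPartialHomeomorph Z Y) (f : X → Y) :
    e ∘ Pullback.fst ∘ pullbackSection e f = f ∘ Subtype.val :=
  funext fun x ↦ (pullbackSection e f x).2

variable [TopologicalSpace X]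

theorem continuous_pullbackSection (e : OpenPartialHomeomorph Z Y) {f : X → Y}
    (hf : Continuous f) : Continuous (pullbackSection e f) := by
  have hsymm : Continuous fun x : f ⁻¹' e.target ↦ e.symm (f x) :=
    e.continuousOn_symm.comp_continuous (hf.comp continuous_subtype_val) Subtype.prop
  exact (hsymm.prodMk continuous_subtype_val).subtype_mk _

theorem isOpenEmbedding_pullbackSection (e : OpenPartialHomeomorph Z Y) {f : X → Y}
    (hf : Continuous f) : IsOpenEmbedding (pullbackSection e f) where
  toIsEmbedding :=
    .of_comp (continuous_pullbackSection e hf) (continuous_snd.comp continuous_subtype_val)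
      IsEmbedding.subtypeVal
  isOpen_range := by
    rw [range_pullbackSection]
    exact e.open_source.preimage (continuous_fst.comp continuous_subtype_val)

theorem isLocalHomeomorph_of_base_change_general {f : X → Y} {g : Z → Y} {t : Set Z}
    (hf : Continuous f) (hg : IsLocalHomeomorphOn g t)
    (hf' : IsLocalHomeomorphOn (Pullback.fst : Pullback g f → Z) (Pullback.fst ⁻¹' t)) :
    IsLocalHomeomorphOn f (f ⁻¹' (g '' t)) := by
  rintro x ⟨z, hz, hzx⟩
  obtain ⟨e, hze, rfl⟩ := hg z hz
  have hx : f x ∈ e.target := hzx ▸ e.map_source hze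
  let x' : f ⁻¹' e.target := ⟨x, hx⟩
  have hx' : (pullbackSection e f x').fst ∈ t := by
    change e.symm (f x) ∈ t
    rwa [← hzx, e.left_inv hze]
  have hsec := (isOpenEmbedding_pullbackSection e hf).isLocalHomeomorph.isLocalHomeomorphOn
    (s := {x'})
  have hcomp : IsLocalHomeomorphOn (f ∘ Subtype.val) {x'} :=
    comp_fst_comp_pullbackSection e f ▸
      hg.comp (hf'.comp hsec (mapsTo_singleton.2 hx')) (mapsTo_singleton.2 hx')
  have hval : IsLocalHomeomorph (Subtype.val : f ⁻¹' e.target → X) :=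
    (e.open_target.preimage hf).isOpenEmbedding_subtypeVal.isLocalHomeomorph
  exact hcomp.of_comp_right hval.isLocalHomeomorphOn x ⟨x', rfl, rfl⟩

end

/-- Local homeomorphisms are local on the base: if the base change `f'` of a
continuous map `f : X → Y` along a surjective local homeomorphism `g : Z → Y`
is a local homeomorphism, then so is `f`. -/
theorem isLocalHomeomorph_of_base_change {X Y Z : Type*}
    [TopologicalSpace X] [TopologicalSpace Y] [TopologicalSpace Z]
    (f : X → Y) (g : Z → Y) (hf : Continuous f) (hg : IsLocalHomeomorph g)
    (hgs : Function.Surjective g)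
    (hf' : IsLocalHomeomorph
      (fun p : {p : Z × X // g p.1 = f p.2} => (p : Z × X).1)) :
    IsLocalHomeomorph f := by
  simpa [isLocalHomeomorph_iff_isLocalHomeomorphOn_univ, hgs.range_eq] using
    isLocalHomeomorph_of_base_change_general hf (hg.isLocalHomeomorphOn (s := univ))
      hf'.isLocalHomeomorphOn
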